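/- Fix α ∈ (0,1) and p ∈ (0,1), and let κ = h / log(1/√(pq)) where h = −p log p − q log q (logs base 2); note 0 < κ < 1. Let Y_n be the number of strings among ξ_1, …, ξ_n that agree with ξ_1 in their first F_n(α)+1 bits. Then for every ε > 0 there exist constants C > 0 and δ > 0 such that for all n ≥ 2: P( 1 − κ − ε < (ln Y_n)/(ln n) < 1 − κ + ε ) ≥ 1 − C n^{−δ}. -/

import Mathlib

/-!
Partial fillup in tries (Janson–Szpankowski), Theorem 1 (two-point concentration
of the α-fillup level `F_n(α)`).

Model: an outcome `ω : ℕ → ℕ → Bool` encodes infinitely many strings, where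
`ω i j` is the `j`-th bit of the `i`-th string; the measure `ν` makes all bits
i.i.d. with `P(bit = 1) = p`.  The trie on `n` strings uses strings `0,…,n-1`.
-/

open MeasureTheory ProbabilityTheory Real Filter

/-- The number of strings among the first `n` (encoded in `ω`) whose first `k` bits
form the word `r ∈ {0,1}^k`. -/
def prefCount (ω : ℕ → ℕ → Bool) (n k : ℕ) (r : Fin k → Bool) : ℕ :=
  ((Finset.range n).filter fun i => ∀ j : Fin k, ω i j = r j).card

/-- `X_k`: the number of words `r ∈ {0,1}^k` that are prefixes of at least two of the
first `n` strings. -/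
def fillCount (ω : ℕ → ℕ → Bool) (n k : ℕ) : ℕ :=
  (Finset.univ.filter fun r : Fin k → Bool => 2 ≤ prefCount ω n k r).card

/-- `X̄_k = X_k / 2^k`, the proportion of filled words at level `k`. -/
noncomputable def fracFilled (ω : ℕ → ℕ → Bool) (n k : ℕ) : ℝ :=
  (fillCount ω n k : ℝ) / 2 ^ k

/-- The α-fillup level `F_n(α) = max {k : X̄_k ≥ α}`. -/
noncomputable def fillupLevel (α : ℝ) (ω : ℕ → ℕ → Bool) (n : ℕ) : ℕ :=
  sSup {k | α ≤ fracFilled ω n k}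

/-- `ν` is a probability measure on `ℕ → ℕ → Bool` under which all the bits
`ω i j` are i.i.d. with `P(bit = 1) = p` (characterized by cylinder probabilities). -/
def IIDBits (p : ℝ) (ν : Measure (ℕ → ℕ → Bool)) : Prop :=
  IsProbabilityMeasure ν ∧
    ∀ (S : Finset (ℕ × ℕ)) (b : ℕ × ℕ → Bool),
      ν {ω | ∀ s ∈ S, ω s.1 s.2 = b s} =
        ∏ s ∈ S, ENNReal.ofReal (if b s then p else 1 - p)

/-- `Y_n`: the number of strings among `ξ_1, …, ξ_n` (indices `0, …, n-1`) that agree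
with the designated string `ξ_1` (index `0`) in their first `F_n(α) + 1` bits. -/
noncomputable def Ycount (α : ℝ) (ω : ℕ → ℕ → Bool) (n : ℕ) : ℕ :=
  ((Finset.range n).filter fun i =>
    ∀ j < fillupLevel α ω n + 1, ω i j = ω 0 j).card

/-!
Words at depth `k ≈ c ln n` are either drawn uniformly (bits of parameter `1/2`, as in the
definition of `X̄_k`) or as the prefix of `ξ_1` (parameter `p`). The number of strings with a given
prefix `r` has mean about `n P(r)`, so Markov's inequality bounds its upper tail at `n^β` by
`min(1, n^{1-β} P(r))` and Chebyshev's bounds its lower tail by `min(1, 8 n^{β-1} / P(r))`.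
Since `min(1, t) ≤ t^s` for `0 < s ≤ 1`, the average of such a bound over the words is at most a
power of `n`, whose exponent vanishes at `s = 0` and has there the derivative
`±(1 - β - c · crossEntropy w p)`, `w` being the parameter of the words. When this derivative is
negative, a small `s` gives polynomial decay.
With `w = 1/2` and `β = 0` this locates `F_n(α)` near `ln n / λ`, where `λ = -ln √(pq)`; with
`w = p` it shows that about `n^{1 - cH}` strings agree with `ξ_1` up to depth `c ln n`, where
`H = crossEntropy p p`. As the latter count is monotone in the depth, the random depth
`F_n(α) + 1` can be replaced by `c ln n` with `c` slightly below or above `1/λ`, and `H/λ = κ`.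
-/

open Asymptotics Finset

section PolyDecay

/-- `f n = O(n^{-δ})` for some `δ > 0`: the decay `O(n^{-Θ(1)})` of failure probabilities. -/
def PolyDecay (f : ℕ → ℝ) : Prop :=
  ∃ δ > (0 : ℝ), f =O[atTop] fun n : ℕ => (n : ℝ) ^ (-δ)

namespace PolyDecay

variable {f g : ℕ → ℝ}

lemma add (hf : PolyDecay f) (hg : PolyDecay g) : PolyDecay fun n => f n + g n := by
  obtain ⟨δ, hδ, hf⟩ := hf
  obtain ⟨δ', hδ', hg⟩ := hg
  have rpow_mono {a b : ℝ} (hab : a ≤ b) :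
      (fun n : ℕ => (n : ℝ) ^ (-b)) =O[atTop] fun n : ℕ => (n : ℝ) ^ (-a) :=
    .of_norm_eventuallyLE <| (eventually_ge_atTop 1).mono fun n hn => by
      simpa [abs_of_nonneg, Real.rpow_nonneg] using
        Real.rpow_le_rpow_of_exponent_le (Nat.one_le_cast.mpr hn) (neg_le_neg hab)
  exact ⟨min δ δ', lt_min hδ hδ',
    (hf.trans (rpow_mono (min_le_left _ _))).add (hg.trans (rpow_mono (min_le_right _ _)))⟩

lemma of_mul_le {c : ℝ} (hc : 0 < c) (hg : PolyDecay g) (hf0 : ∀ᶠ n in atTop, 0 ≤ f n)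
    (hfg : ∀ᶠ n in atTop, c * f n ≤ g n) : PolyDecay f := by
  obtain ⟨δ, hδ, hg⟩ := hg
  refine ⟨δ, hδ, .trans (.of_bound c⁻¹ ?_) hg⟩
  filter_upwards [hf0, hfg] with n h0 h
  rw [Real.norm_of_nonneg h0, le_inv_mul_iff₀ hc]
  exact h.trans (Real.le_norm_self _)

lemma of_le (hg : PolyDecay g) (hf0 : ∀ᶠ n in atTop, 0 ≤ f n)
    (hfg : ∀ᶠ n in atTop, f n ≤ g n) : PolyDecay f :=
  hg.of_mul_le one_pos hf0 (by simpa only [one_mul] using hfg)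

lemma exists_forall_le (hf : PolyDecay f) :
    ∃ C > (0 : ℝ), ∃ δ > (0 : ℝ), ∀ n : ℕ, 1 ≤ n → f n ≤ C * (n : ℝ) ^ (-δ) := by
  obtain ⟨δ, hδ, hf⟩ := hf
  obtain ⟨C, hC, hbound⟩ := bound_of_isBigO_nat_atTop hf
  refine ⟨C, hC, δ, hδ, fun n hn => ?_⟩
  have hpos : 0 < (n : ℝ) ^ (-δ) := Real.rpow_pos_of_pos (Nat.cast_pos.mpr hn) _
  simpa only [Real.norm_of_nonneg hpos.le] using (Real.le_norm_self _).trans (hbound hpos.ne')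

variable {Ω : Type*} {mΩ : MeasurableSpace Ω} {μ : Measure Ω}

lemma measureReal_of_subset_union [IsFiniteMeasure μ] {A B E : ℕ → Set Ω}
    (hA : PolyDecay fun n => μ.real (A n)) (hB : PolyDecay fun n => μ.real (B n))
    (hE : ∀ᶠ n in atTop, E n ⊆ A n ∪ B n) : PolyDecay fun n => μ.real (E n) :=
  (hA.add hB).of_le (.of_forall fun _ => measureReal_nonneg) <| hE.mono fun _ h =>
    (measureReal_mono h).trans (measureReal_union_le _ _)

lemma exists_ofReal_one_sub_le_measure [IsProbabilityMeasure μ] {G : ℕ → Set Ω}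
    (hG : PolyDecay fun n => μ.real (G n)ᶜ) :
    ∃ C > (0 : ℝ), ∃ δ > (0 : ℝ), ∀ n : ℕ, 1 ≤ n →
      ENNReal.ofReal (1 - C * (n : ℝ) ^ (-δ)) ≤ μ (G n) := by
  obtain ⟨C, hC, δ, hδ, hbound⟩ := hG.exists_forall_le
  refine ⟨C, hC, δ, hδ, fun n hn => ENNReal.ofReal_le_of_le_toReal ?_⟩
  have hcover : 1 ≤ μ.real (G n) + μ.real (G n)ᶜ := by
    simpa only [Set.union_compl_self, probReal_univ] using
      measureReal_union_le (μ := μ) (G n) (G n)ᶜ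
  rw [← measureReal_def]
  linarith [hbound n hn]

end PolyDecay

end PolyDecay

section SecondMoment

variable {Ω ι : Type*} {mΩ : MeasurableSpace Ω} {μ : Measure Ω}

lemma mul_measureReal_le_sum_mul_indicator_le [IsFiniteMeasure μ] {J : Finset ι} {w : ι → ℝ}
    (hw : ∀ i ∈ J, 0 ≤ w i) {E : ι → Set Ω} (hE : ∀ i ∈ J, MeasurableSet (E i)) (c : ℝ) :
    c * μ.real {ω | c ≤ ∑ i ∈ J, w i * (E i).indicator 1 ω} ≤ ∑ i ∈ J, w i * μ.real (E i) := by
  have hint : ∀ i ∈ J, Integrable (fun ω => w i * (E i).indicator (1 : Ω → ℝ) ω) μ :=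
    fun i hi => ((integrable_const 1).indicator (hE i hi)).const_mul _
  have hnonneg (ω : Ω) : 0 ≤ ∑ i ∈ J, w i * (E i).indicator (1 : Ω → ℝ) ω :=
    sum_nonneg fun i hi =>
      mul_nonneg (hw i hi) (Set.indicator_nonneg (fun _ _ => zero_le_one) ω)
  calc c * μ.real {ω | c ≤ ∑ i ∈ J, w i * (E i).indicator 1 ω}
      ≤ ∫ ω, ∑ i ∈ J, w i * (E i).indicator (1 : Ω → ℝ) ω ∂μ :=
        mul_meas_ge_le_integral_of_nonneg (.of_forall hnonneg) (integrable_finsetSum J hint) c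
    _ = ∑ i ∈ J, w i * μ.real (E i) := by
        rw [integral_finsetSum J hint]
        exact sum_congr rfl fun i hi => by
          rw [integral_const_mul, integral_indicator_one (hE i hi)]

variable [IsProbabilityMeasure μ] {X : ι → Ω → ℝ} {J : Finset ι}

lemma variance_sum_le_integral_sum (hX : ∀ i ∈ J, AEMeasurable (X i) μ)
    (hX01 : ∀ i ∈ J, ∀ᵐ ω ∂μ, X i ω ∈ Set.Icc 0 1)
    (hindep : (J : Set ι).Pairwise fun i j => X i ⟂ᵢ[μ] X j) :
    Var[∑ i ∈ J, X i; μ] ≤ μ[∑ i ∈ J, X i] := by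
  have hLp : ∀ i ∈ J, MemLp (X i) 2 μ := fun i hi =>
    memLp_of_bounded (hX01 i hi) (hX i hi).aestronglyMeasurable 2
  have hint : ∀ i ∈ J, Integrable (X i) μ := fun i hi => (hLp i hi).integrable one_le_two
  rw [IndepFun.variance_sum hLp hindep, sum_fn, integral_finsetSum _ hint]
  refine sum_le_sum fun i hi => ?_
  refine (variance_le_expectation_sq (hX i hi).aestronglyMeasurable).trans
    (integral_mono_ae (hLp i hi).integrable_sq (hint i hi) ?_)
  filter_upwards [hX01 i hi] with ω hω
  exact pow_le_of_le_one hω.1 hω.2 two_ne_zero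

lemma integral_mul_measureReal_sum_le_le (hX : ∀ i ∈ J, AEMeasurable (X i) μ)
    (hX01 : ∀ i ∈ J, ∀ᵐ ω ∂μ, X i ω ∈ Set.Icc 0 1)
    (hindep : (J : Set ι).Pairwise fun i j => X i ⟂ᵢ[μ] X j) {T : ℝ} (hT : 1 ≤ T) :
    μ[∑ i ∈ J, X i] * μ.real {ω | ∑ i ∈ J, X i ω ≤ T} ≤ 4 * T := by
  set S : Ω → ℝ := ∑ i ∈ J, X i with hS
  set m : ℝ := μ[S]
  have hvar : Var[S; μ] ≤ m := variance_sum_le_integral_sum hX hX01 hindep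
  have hm0 : 0 ≤ m := (variance_nonneg S μ).trans hvar
  rcases le_or_gt m (2 * T) with hmT | hmT
  · calc m * μ.real {ω | ∑ i ∈ J, X i ω ≤ T} ≤ m * 1 := by gcongr; exact measureReal_le_one
      _ ≤ 4 * T := by linarith
  have hSLp : MemLp S 2 μ := memLp_finsetSum' J fun i hi =>
    memLp_of_bounded (hX01 i hi) (hX i hi).aestronglyMeasurable 2
  have hsub : {ω | ∑ i ∈ J, X i ω ≤ T} ⊆ {ω | m / 2 ≤ |S ω - m|} := fun ω hω => by
    have hω : S ω ≤ T := by simpa only [hS, Finset.sum_apply] using Set.mem_ofPred.mp hω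
    exact le_abs.mpr (.inr (by linarith : m / 2 ≤ -(S ω - m)))
  have hcheb : μ.real {ω | m / 2 ≤ |S ω - m|} ≤ Var[S; μ] / (m / 2) ^ 2 :=
    ENNReal.toReal_le_of_le_ofReal (div_nonneg (variance_nonneg S μ) (sq_nonneg _))
      (meas_ge_le_variance_div_sq hSLp (by linarith))
  calc m * μ.real {ω | ∑ i ∈ J, X i ω ≤ T}
      ≤ m * (m / (m / 2) ^ 2) := by
        gcongr
        exact (measureReal_mono hsub).trans (hcheb.trans (by gcongr))
    _ = 4 := by field_simp [show m ≠ 0 by linarith]; norm_num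
    _ ≤ 4 * T := by linarith

end SecondMoment

section ExponentialTilting

/-- The deterministic depth `⌊c ln n⌋` to which the random fillup level is compared. -/
noncomputable def logLevel (c : ℝ) (n : ℕ) : ℕ := ⌊c * Real.log n⌋₊

variable {β : Type*} [Fintype β] {w y : β → ℝ} {a c : ℝ}

lemma exists_mul_add_mul_log_sum_rpow_neg (hw1 : ∑ b, w b = 1) (hy : ∀ b, 0 < y b)
    (hac : a + c * ∑ b, w b * Real.log (y b) < 0) :
    ∃ s ∈ Set.Ioc (0 : ℝ) 1, a * s + c * Real.log (∑ b, w b * y b ^ s) < 0 := by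
  set φ : ℝ → ℝ := fun s => a * s + c * Real.log (∑ b, w b * y b ^ s) with hφ
  have hφ0 : φ 0 = 0 := by simp [hφ, hw1]
  have hmgf : HasDerivAt (fun s : ℝ => ∑ b, w b * y b ^ s) (∑ b, w b * Real.log (y b)) 0 :=
    .fun_sum fun b _ => by
      simpa using ((hasDerivAt_id (0 : ℝ)).const_rpow (hy b)).const_mul (w b)
  have hderiv : HasDerivAt φ (a + c * ∑ b, w b * Real.log (y b)) 0 := by
    simpa [hw1] using ((hasDerivAt_id' (0 : ℝ)).const_mul a).fun_add
      ((hmgf.log (by simp [hw1])).const_mul c)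
  have hsign := eventually_nhdsWithin_sign_eq_of_deriv_neg (hderiv.deriv.trans_lt hac) hφ0
  obtain ⟨s, hs, hs01⟩ := ((hsign.filter_mono nhdsWithin_le_nhds).and
    (Ioc_mem_nhdsGT one_pos)).exists
  refine ⟨s, hs01, sign_eq_neg_one_iff.mp (hs.trans ?_)⟩
  rw [zero_sub, sign_neg (neg_neg_of_pos hs01.1)]

lemma pow_logLevel_le {M : ℝ} (hM : 0 < M) (hc : 0 ≤ c) {n : ℕ} (hn : 1 ≤ n) :
    M ^ logLevel c n ≤ Real.exp |Real.log M| * (n : ℝ) ^ (c * Real.log M) := by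
  have hlog : 0 ≤ c * Real.log n := mul_nonneg hc (Real.log_natCast_nonneg n)
  have hle : (logLevel c n : ℝ) ≤ c * Real.log n := Nat.floor_le hlog
  have hlt : c * Real.log n < logLevel c n + 1 := Nat.lt_floor_add_one _
  have hfloor : |(logLevel c n : ℝ) - c * Real.log n| ≤ 1 :=
    abs_le.mpr ⟨by linarith, by linarith⟩
  rw [← Real.rpow_natCast, Real.rpow_def_of_pos hM,
    Real.rpow_def_of_pos (Nat.cast_pos.mpr hn), ← Real.exp_add, Real.exp_le_exp]
  calc Real.log M * logLevel c n
      = Real.log M * (logLevel c n - c * Real.log n) + Real.log n * (c * Real.log M) := by ring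
    _ ≤ |Real.log M| * 1 + Real.log n * (c * Real.log M) := by
        refine add_le_add_left ((le_abs_self _).trans ?_) _
        rw [abs_mul]
        exact mul_le_mul_of_nonneg_left hfloor (abs_nonneg _)
    _ = |Real.log M| + Real.log n * (c * Real.log M) := by rw [mul_one]

lemma min_one_le_rpow {t s : ℝ} (ht : 0 ≤ t) (hs : s ∈ Set.Ioc (0 : ℝ) 1) : min 1 t ≤ t ^ s := by
  rcases le_total 1 t with h | h
  · exact (min_le_left _ _).trans (Real.one_le_rpow h hs.1.le)
  · exact (min_le_right _ _).trans (Real.self_le_rpow_of_le_one ht h hs.2)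

lemma sum_prod_mul_min_one_le (hw : ∀ b, 0 ≤ w b) (hy : ∀ b, 0 < y b) {A s : ℝ} (hA : 0 ≤ A)
    (hs : s ∈ Set.Ioc (0 : ℝ) 1) (k : ℕ) :
    ∑ r : Fin k → β, (∏ j, w (r j)) * min 1 (A * ∏ j, y (r j)) ≤
      A ^ s * (∑ b, w b * y b ^ s) ^ k := by
  rw [Fintype.sum_pow, mul_sum]
  refine sum_le_sum fun r _ => ?_
  have hprod : 0 ≤ ∏ j, y (r j) := prod_nonneg fun j _ => (hy _).le
  calc (∏ j, w (r j)) * min 1 (A * ∏ j, y (r j))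
      ≤ (∏ j, w (r j)) * (A * ∏ j, y (r j)) ^ s :=
        mul_le_mul_of_nonneg_left (min_one_le_rpow (mul_nonneg hA hprod) hs)
          (prod_nonneg fun j _ => hw _)
    _ = A ^ s * ∏ j, w (r j) * y (r j) ^ s := by
        rw [Real.mul_rpow hA hprod, ← Real.finsetProd_rpow _ _ fun j _ => (hy _).le,
          prod_mul_distrib, mul_left_comm]

lemma polyDecay_sum_prod_mul_min_one (hw : ∀ b, 0 ≤ w b) (hw1 : ∑ b, w b = 1)
    (hy : ∀ b, 0 < y b) {K : ℝ} (hK : 0 ≤ K) (hc : 0 ≤ c)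
    (hac : a + c * ∑ b, w b * Real.log (y b) < 0) :
    PolyDecay fun n => ∑ r : Fin (logLevel c n) → β,
      (∏ j, w (r j)) * min 1 (K * (n : ℝ) ^ a * ∏ j, y (r j)) := by
  obtain ⟨s, hs, hneg⟩ := exists_mul_add_mul_log_sum_rpow_neg hw1 hy hac
  set M : ℝ := ∑ b, w b * y b ^ s
  have hM0 : 0 < M := by
    obtain ⟨b, -, hb⟩ := exists_lt_of_sum_lt (s := univ) (f := fun _ => (0 : ℝ)) (g := w)
      (by simp [hw1])
    exact sum_pos' (fun b _ => mul_nonneg (hw b) (Real.rpow_nonneg (hy b).le s))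
      ⟨b, mem_univ b, mul_pos hb (Real.rpow_pos_of_pos (hy b) s)⟩
  refine ⟨-(a * s + c * Real.log M), by linarith, .of_bound (K ^ s * Real.exp |Real.log M|) ?_⟩
  filter_upwards [eventually_ge_atTop 1] with n hn
  have hn0 : (0 : ℝ) < n := Nat.cast_pos.mpr hn
  have hsum0 : 0 ≤ ∑ r : Fin (logLevel c n) → β,
      (∏ j, w (r j)) * min 1 (K * (n : ℝ) ^ a * ∏ j, y (r j)) :=
    sum_nonneg fun r _ => mul_nonneg (prod_nonneg fun j _ => hw _) <|
      le_min zero_le_one <| mul_nonneg (by positivity) <| prod_nonneg fun j _ => (hy _).le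
  rw [Real.norm_of_nonneg hsum0, Real.norm_of_nonneg (by positivity), neg_neg]
  calc _ ≤ (K * (n : ℝ) ^ a) ^ s * M ^ logLevel c n :=
        sum_prod_mul_min_one_le hw hy (by positivity) hs _
    _ ≤ (K * (n : ℝ) ^ a) ^ s * (Real.exp |Real.log M| * (n : ℝ) ^ (c * Real.log M)) := by
        gcongr
        exact pow_logLevel_le hM0 hc hn
    _ = K ^ s * Real.exp |Real.log M| * (n : ℝ) ^ (a * s + c * Real.log M) := by
        rw [Real.mul_rpow hK (by positivity), ← Real.rpow_mul hn0.le, Real.rpow_add hn0]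
        ring

end ExponentialTilting

section Words

/-- The probability of the bit `b` when ones have probability `p`. -/
noncomputable def bitProb (p : ℝ) (b : Bool) : ℝ := if b then p else 1 - p

/-- The probability that a random string has prefix `r`. -/
noncomputable def wordProb (p : ℝ) {k : ℕ} (r : Fin k → Bool) : ℝ := ∏ j, bitProb p (r j)

/-- `-∑ b, P(b) ln Q(b)` for Bernoulli laws `P`, `Q` with parameters `w`, `p`: the exponential
rate at which the `Q`-probability of a long `P`-random word decays. -/
noncomputable def crossEntropy (w p : ℝ) : ℝ := -(w * Real.log p + (1 - w) * Real.log (1 - p))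

variable {p w : ℝ} {k : ℕ}

lemma bitProb_nonneg (hp : p ∈ Set.Icc (0 : ℝ) 1) (b : Bool) : 0 ≤ bitProb p b := by
  cases b <;> simp [bitProb, hp.1, hp.2]

lemma bitProb_pos (hp : p ∈ Set.Ioo (0 : ℝ) 1) (b : Bool) : 0 < bitProb p b := by
  cases b <;> simp [bitProb, hp.1, hp.2]

lemma sum_bitProb (p : ℝ) : ∑ b, bitProb p b = 1 := by simp [bitProb]

lemma sum_bitProb_mul_log_bitProb (w p : ℝ) :
    ∑ b, bitProb w b * Real.log (bitProb p b) = -crossEntropy w p := by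
  simp [bitProb, crossEntropy]

lemma wordProb_nonneg (hp : p ∈ Set.Icc (0 : ℝ) 1) (r : Fin k → Bool) : 0 ≤ wordProb p r :=
  prod_nonneg fun j _ => bitProb_nonneg hp (r j)

lemma wordProb_pos (hp : p ∈ Set.Ioo (0 : ℝ) 1) (r : Fin k → Bool) : 0 < wordProb p r :=
  prod_pos fun j _ => bitProb_pos hp (r j)

lemma sum_wordProb (p : ℝ) (k : ℕ) : ∑ r : Fin k → Bool, wordProb p r = 1 := by
  simp only [wordProb, ← Fintype.sum_pow, sum_bitProb, one_pow]

lemma wordProb_half (r : Fin k → Bool) : wordProb (1 / 2) r = (2 ^ k : ℝ)⁻¹ := by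
  have hbit (b : Bool) : bitProb (1 / 2) b = 2⁻¹ := by cases b <;> norm_num [bitProb]
  simp only [wordProb, hbit, prod_const, card_univ, Fintype.card_fin, inv_pow]

lemma crossEntropy_pos (hw : w ∈ Set.Icc (0 : ℝ) 1) (hp : p ∈ Set.Ioo (0 : ℝ) 1) :
    0 < crossEntropy w p := by
  have hlog := Real.log_neg hp.1 hp.2
  have hlog' := Real.log_neg (sub_pos.mpr hp.2) (sub_lt_self 1 hp.1)
  unfold crossEntropy
  rcases hw.1.eq_or_lt with rfl | hw0
  · linarith
  · linarith [mul_neg_of_pos_of_neg hw0 hlog,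
      mul_nonpos_of_nonneg_of_nonpos (sub_nonneg.mpr hw.2) hlog'.le]

lemma crossEntropy_self_le_half (hp : p ∈ Set.Ioo (0 : ℝ) 1) :
    crossEntropy p p ≤ crossEntropy (1 / 2) p := by
  have hmono : 0 ≤ (p - (1 - p)) * (Real.log p - Real.log (1 - p)) := by
    rcases le_total p (1 - p) with h | h
    · exact mul_nonneg_of_nonpos_of_nonpos (by linarith)
        (by linarith [Real.log_le_log hp.1 h])
    · exact mul_nonneg (by linarith)
        (by linarith [Real.log_le_log (sub_pos.mpr hp.2) h])
  unfold crossEntropy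
  linarith

end Words

section Occurrences

variable {k : ℕ}

/-- The first `k` bits of the `i`-th string. -/
def strPrefix (k i : ℕ) (ω : ℕ → ℕ → Bool) : Fin k → Bool := fun j => ω i j

/-- The event that the `i`-th string has prefix `r`. -/
def prefixEvent (r : Fin k → Bool) (i : ℕ) : Set (ℕ → ℕ → Bool) := {ω | strPrefix k i ω = r}

/-- The number of strings with index in `J` that have prefix `r`. -/
def occCount (J : Finset ℕ) (r : Fin k → Bool) (ω : ℕ → ℕ → Bool) : ℕ :=
  #{i ∈ J | strPrefix k i ω = r}

lemma measurable_strPrefix (k i : ℕ) : Measurable (strPrefix k i) := by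
  unfold strPrefix
  fun_prop

lemma measurableSet_prefixEvent (r : Fin k → Bool) (i : ℕ) : MeasurableSet (prefixEvent r i) :=
  measurable_strPrefix k i (measurableSet_singleton r)

lemma cast_occCount (J : Finset ℕ) (r : Fin k → Bool) (ω : ℕ → ℕ → Bool) :
    (occCount J r ω : ℝ) = ∑ i ∈ J, (prefixEvent r i).indicator 1 ω := by
  rw [occCount, Finset.natCast_card_filter]
  exact sum_congr rfl fun i _ => by
    simp only [prefixEvent, Set.indicator_apply, Set.mem_ofPred_eq, Pi.one_apply]

lemma measurable_occCount (J : Finset ℕ) (r : Fin k → Bool) : Measurable (occCount J r) := by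
  unfold occCount
  simp only [card_filter]
  exact Finset.measurable_fun_sum J fun i _ =>
    Measurable.ite (measurableSet_prefixEvent r i) measurable_const measurable_const

lemma prefCount_eq_occCount (ω : ℕ → ℕ → Bool) (n : ℕ) (r : Fin k → Bool) :
    prefCount ω n k r = occCount (range n) r ω := by
  simp only [prefCount, occCount, strPrefix, funext_iff]

end Occurrences

namespace IIDBits

variable {p : ℝ} {ν : Measure (ℕ → ℕ → Bool)} {k : ℕ}

lemma measure_biInter_prefixEvent (hν : IIDBits p ν) (hp : p ∈ Set.Icc (0 : ℝ) 1)
    (r : Fin k → Bool) (I : Finset ℕ) :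
    ν (⋂ i ∈ I, prefixEvent r i) = ENNReal.ofReal (wordProb p r) ^ #I := by
  set b : ℕ × ℕ → Bool := fun s => if h : s.2 < k then r ⟨s.2, h⟩ else false with hb
  have hset : ⋂ i ∈ I, prefixEvent r i = {ω | ∀ s ∈ I ×ˢ range k, ω s.1 s.2 = b s} := by
    ext ω
    simp only [Set.mem_iInter, prefixEvent, strPrefix, funext_iff, Fin.forall_iff,
      Set.mem_ofPred_eq, mem_product, mem_range, Prod.forall, hb]
    exact ⟨fun h i j hij => by simp only [hij.2, dite_true, h i hij.1 j hij.2],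
      fun h i hi j hj => by simpa only [hj, dite_true] using h i j ⟨hi, hj⟩⟩
  have hword : ∏ j ∈ range k, ENNReal.ofReal (bitProb p (if h : j < k then r ⟨j, h⟩ else false)) =
      ENNReal.ofReal (wordProb p r) := by
    rw [wordProb, ENNReal.ofReal_prod_of_nonneg fun j _ => bitProb_nonneg hp _, prod_range]
    simp only [Fin.is_lt, dite_true]
  calc ν (⋂ i ∈ I, prefixEvent r i) = ∏ s ∈ I ×ˢ range k, ENNReal.ofReal (bitProb p (b s)) := by
        rw [hset]
        exact hν.2 _ b
    _ = ENNReal.ofReal (wordProb p r) ^ #I := by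
        rw [prod_product, ← prod_const]
        exact prod_congr rfl fun i _ => hword

lemma measureReal_prefixEvent (hν : IIDBits p ν) (hp : p ∈ Set.Icc (0 : ℝ) 1)
    (r : Fin k → Bool) (i : ℕ) : ν.real (prefixEvent r i) = wordProb p r := by
  have h := hν.measure_biInter_prefixEvent hp r {i}
  rw [Finset.set_biInter_singleton, card_singleton, pow_one] at h
  rw [measureReal_def, h, ENNReal.toReal_ofReal (wordProb_nonneg hp r)]

lemma iIndepSet_prefixEvent (hν : IIDBits p ν) (hp : p ∈ Set.Icc (0 : ℝ) 1)
    (r : Fin k → Bool) : iIndepSet (prefixEvent r) ν := by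
  refine (iIndepSet_iff_meas_biInter (measurableSet_prefixEvent r)).mpr fun I => ?_
  have hone (i : ℕ) : ν (prefixEvent r i) = ENNReal.ofReal (wordProb p r) := by
    simpa using hν.measure_biInter_prefixEvent hp r {i}
  simp only [hν.measure_biInter_prefixEvent hp r I, hone, prod_const]

lemma mul_measureReal_le_occCount_le (hν : IIDBits p ν) (hp : p ∈ Set.Icc (0 : ℝ) 1)
    (J : Finset ℕ) (r : Fin k → Bool) (T : ℝ) :
    T * ν.real {ω | T ≤ occCount J r ω} ≤ #J * wordProb p r := by
  have := hν.1
  have hmarkov := mul_measureReal_le_sum_mul_indicator_le (μ := ν) (J := J)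
    (fun _ _ => zero_le_one) (fun i _ => measurableSet_prefixEvent r i) T
  simpa only [one_mul, ← cast_occCount, hν.measureReal_prefixEvent hp, sum_const,
    nsmul_eq_mul] using hmarkov

lemma mul_measureReal_occCount_le_le (hν : IIDBits p ν) (hp : p ∈ Set.Icc (0 : ℝ) 1)
    (J : Finset ℕ) (r : Fin k → Bool) {T : ℝ} (hT : 1 ≤ T) :
    #J * wordProb p r * ν.real {ω | (occCount J r ω : ℝ) ≤ T} ≤ 4 * T := by
  have := hν.1
  have hmeas (i : ℕ) : Measurable ((prefixEvent r i).indicator fun _ => (1 : ℝ)) :=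
    measurable_const.indicator (measurableSet_prefixEvent r i)
  have hmean : ν[∑ i ∈ J, (prefixEvent r i).indicator fun _ => (1 : ℝ)] = #J * wordProb p r := by
    rw [sum_fn, integral_finsetSum J fun i _ =>
      (integrable_const 1).indicator (measurableSet_prefixEvent r i)]
    simp [integral_indicator_const, measurableSet_prefixEvent, hν.measureReal_prefixEvent hp]
  have h01 (i : ℕ) (ω : ℕ → ℕ → Bool) :
      (prefixEvent r i).indicator (fun _ => (1 : ℝ)) ω ∈ Set.Icc 0 1 :=
    ⟨Set.indicator_nonneg (fun _ _ => zero_le_one) ω,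
      Set.indicator_apply_le' (fun _ => le_rfl) fun _ => zero_le_one⟩
  have htail := integral_mul_measureReal_sum_le_le (J := J) (fun i _ => (hmeas i).aemeasurable)
    (fun i _ => .of_forall (h01 i))
    (fun i _ j _ hij => (hν.iIndepSet_prefixEvent hp r).iIndepFun_indicator.indepFun hij) hT
  rw [hmean] at htail
  simpa only [cast_occCount, Pi.one_def] using htail

lemma measureReal_occCount_strPrefix_mem (hν : IIDBits p ν) (hp : p ∈ Set.Icc (0 : ℝ) 1)
    {J : Finset ℕ} {i : ℕ} (hi : i ∉ J) {S : Set ℝ} (hS : MeasurableSet S) :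
    ν.real {ω | (occCount J (strPrefix k i ω) ω : ℝ) ∈ S} =
      ∑ r : Fin k → Bool, wordProb p r * ν.real {ω | (occCount J r ω : ℝ) ∈ S} := by
  have := hν.1
  have hocc (r : Fin k → Bool) : MeasurableSet {ω | (occCount J r ω : ℝ) ∈ S} :=
    Measurable.of_discrete.comp (measurable_occCount J r) hS
  have hunion : {ω | (occCount J (strPrefix k i ω) ω : ℝ) ∈ S} =
      ⋃ r : Fin k → Bool, prefixEvent r i ∩ {ω | (occCount J r ω : ℝ) ∈ S} := by
    ext ω
    simp [prefixEvent]
  have hdisj : Pairwise fun r s : Fin k → Bool =>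
      Disjoint (prefixEvent r i ∩ {ω | (occCount J r ω : ℝ) ∈ S})
        (prefixEvent s i ∩ {ω | (occCount J s ω : ℝ) ∈ S}) := fun r s hrs =>
    Set.disjoint_left.mpr fun ω hr hs => hrs (hr.1.symm.trans hs.1)
  have hindep (r : Fin k → Bool) : (prefixEvent r i).indicator (fun _ => (1 : ℝ)) ⟂ᵢ[ν]
      fun ω => (occCount J r ω : ℝ) := by
    have hiIndep : iIndepFun (fun j => (prefixEvent r j).indicator fun _ => (1 : ℝ)) ν :=
      (hν.iIndepSet_prefixEvent hp r).iIndepFun_indicator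
    have h := hiIndep.indepFun_finsetSum_of_notMem
      (fun j => measurable_const.indicator (measurableSet_prefixEvent r j)) hi
    simpa only [sum_fn, cast_occCount, Pi.one_def] using h.symm
  rw [hunion, measureReal_iUnion_fintype hdisj fun r =>
    (measurableSet_prefixEvent r i).inter (hocc r)]
  refine sum_congr rfl fun r _ => ?_
  have hpre : (prefixEvent r i).indicator (fun _ => (1 : ℝ)) ⁻¹' {1} = prefixEvent r i := by
    ext ω
    simp
  have hprod := (hindep r).measure_inter_preimage_eq_mul {1} S (measurableSet_singleton 1) hS
  rw [hpre] at hprod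
  rw [← hν.measureReal_prefixEvent hp r i, measureReal_def, measureReal_def, measureReal_def,
    ← ENNReal.toReal_mul]
  exact congrArg ENNReal.toReal hprod

end IIDBits

namespace IIDBits

variable {p w c β : ℝ} {ν : Measure (ℕ → ℕ → Bool)} {J : ℕ → Finset ℕ}

lemma polyDecay_sum_wordProb_mul_rpow_le_occCount (hν : IIDBits p ν)
    (hp : p ∈ Set.Ioo (0 : ℝ) 1) (hw : w ∈ Set.Icc (0 : ℝ) 1) (hc : 0 ≤ c)
    (hJ : ∀ n, #(J n) ≤ n) (hβ : 1 - β < c * crossEntropy w p) :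
    PolyDecay fun n => ∑ r : Fin (logLevel c n) → Bool,
      wordProb w r * ν.real {ω | (n : ℝ) ^ β ≤ occCount (J n) r ω} := by
  have := hν.1
  have hdecay := polyDecay_sum_prod_mul_min_one (K := 1) (a := 1 - β) (bitProb_nonneg hw)
    (sum_bitProb w) (bitProb_pos hp) zero_le_one hc
    (by rw [sum_bitProb_mul_log_bitProb]; linarith)
  refine hdecay.of_le (.of_forall fun n => sum_nonneg fun r _ =>
    mul_nonneg (wordProb_nonneg hw r) measureReal_nonneg) ?_
  filter_upwards [eventually_ge_atTop 1] with n hn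
  have hn0 : (0 : ℝ) < n := Nat.cast_pos.mpr hn
  refine sum_le_sum fun r _ => mul_le_mul_of_nonneg_left
    (le_min measureReal_le_one ?_) (wordProb_nonneg hw r)
  rw [one_mul, Real.rpow_sub hn0, Real.rpow_one, div_mul_eq_mul_div,
    le_div_iff₀' (Real.rpow_pos_of_pos hn0 β)]
  calc (n : ℝ) ^ β * ν.real {ω | (n : ℝ) ^ β ≤ occCount (J n) r ω}
      ≤ #(J n) * wordProb p r :=
        hν.mul_measureReal_le_occCount_le (Set.Ioo_subset_Icc_self hp) (J n) r _
    _ ≤ n * wordProb p r :=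
        mul_le_mul_of_nonneg_right (Nat.cast_le.mpr (hJ n)) (wordProb_pos hp r).le

lemma polyDecay_sum_wordProb_mul_occCount_le_rpow (hν : IIDBits p ν)
    (hp : p ∈ Set.Ioo (0 : ℝ) 1) (hw : w ∈ Set.Icc (0 : ℝ) 1) (hc : 0 ≤ c)
    (hJ : ∀ᶠ n in atTop, n ≤ 2 * #(J n)) (hβ0 : 0 ≤ β) (hβ : c * crossEntropy w p < 1 - β) :
    PolyDecay fun n => ∑ r : Fin (logLevel c n) → Bool,
      wordProb w r * ν.real {ω | (occCount (J n) r ω : ℝ) ≤ (n : ℝ) ^ β} := by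
  have := hν.1
  have hdecay := polyDecay_sum_prod_mul_min_one (K := 8) (a := β - 1) (bitProb_nonneg hw)
    (sum_bitProb w) (fun b => inv_pos.mpr (bitProb_pos hp b)) (by norm_num) hc
    (by simp only [Real.log_inv, mul_neg, sum_neg_distrib, sum_bitProb_mul_log_bitProb]; linarith)
  refine hdecay.of_le (.of_forall fun n => sum_nonneg fun r _ =>
    mul_nonneg (wordProb_nonneg hw r) measureReal_nonneg) ?_
  filter_upwards [eventually_ge_atTop 1, hJ] with n hn hJn
  have hn0 : (0 : ℝ) < n := Nat.cast_pos.mpr hn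
  refine sum_le_sum fun r _ => mul_le_mul_of_nonneg_left
    (le_min measureReal_le_one ?_) (wordProb_nonneg hw r)
  have hword : 0 < wordProb p r := wordProb_pos hp r
  rw [prod_inv_distrib, ← wordProb, ← div_eq_mul_inv, le_div_iff₀ hword, Real.rpow_sub hn0,
    Real.rpow_one, mul_div_assoc', le_div_iff₀ hn0]
  set P := ν.real {ω | (occCount (J n) r ω : ℝ) ≤ (n : ℝ) ^ β}
  calc P * wordProb p r * n ≤ P * wordProb p r * (2 * #(J n)) :=
        mul_le_mul_of_nonneg_left (mod_cast hJn) (mul_nonneg measureReal_nonneg hword.le)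
    _ = 2 * (#(J n) * wordProb p r * P) := by ring
    _ ≤ 2 * (4 * (n : ℝ) ^ β) := mul_le_mul_of_nonneg_left
        (hν.mul_measureReal_occCount_le_le (Set.Ioo_subset_Icc_self hp) (J n) r
          (Real.one_le_rpow (Nat.one_le_cast.mpr hn) hβ0)) zero_le_two
    _ = 8 * (n : ℝ) ^ β := by ring

end IIDBits

section FillupLevel

variable {α : ℝ} {ω : ℕ → ℕ → Bool} {n k : ℕ}

lemma fillCount_le (ω : ℕ → ℕ → Bool) (n k : ℕ) : fillCount ω n k ≤ n := by
  have hsub : ({r | 2 ≤ prefCount ω n k r} : Finset (Fin k → Bool)) ⊆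
      (range n).image fun i => strPrefix k i ω := fun r hr => by
    simp only [mem_filter, mem_univ, true_and, prefCount_eq_occCount] at hr
    obtain ⟨i, hi⟩ := card_pos.mp (two_pos.trans_le hr)
    exact mem_image.mpr ⟨i, mem_filter.mp hi⟩
  exact (card_le_card hsub).trans (card_image_le.trans_eq (card_range n))

lemma fillCount_succ_le (ω : ℕ → ℕ → Bool) (n k : ℕ) :
    fillCount ω n (k + 1) ≤ 2 * fillCount ω n k := by
  have hsub : ({r | 2 ≤ prefCount ω n (k + 1) r} : Finset (Fin (k + 1) → Bool)) ⊆
      (({r | 2 ≤ prefCount ω n k r} : Finset (Fin k → Bool)) ×ˢ (univ : Finset Bool)).image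
        fun s => Fin.snoc (α := fun _ => Bool) s.1 s.2 := fun r hr => by
    simp only [mem_filter, mem_univ, true_and] at hr
    refine mem_image.mpr ⟨(Fin.init r, r (Fin.last k)), ?_, Fin.snoc_init_self r⟩
    simp only [mem_product, mem_filter, mem_univ, true_and, and_true]
    exact hr.trans (card_le_card (monotone_filter_right _ fun i _ hi j => hi j.castSucc))
  calc fillCount ω n (k + 1) ≤ _ := (card_le_card hsub).trans card_image_le
    _ = 2 * fillCount ω n k := by rw [card_product, card_univ, Fintype.card_bool, mul_comm]; rfl

lemma fracFilled_zero (ω : ℕ → ℕ → Bool) (hn : 2 ≤ n) : fracFilled ω n 0 = 1 := by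
  simp [fracFilled, fillCount, prefCount, hn]

lemma fracFilled_antitone (ω : ℕ → ℕ → Bool) (n : ℕ) : Antitone (fracFilled ω n) := by
  refine antitone_nat_of_succ_le fun k => ?_
  rw [fracFilled, fracFilled, div_le_div_iff₀ (by positivity) (by positivity), pow_succ',
    ← mul_assoc, mul_comm _ (2 : ℝ)]
  gcongr
  exact_mod_cast fillCount_succ_le ω n k

lemma bddAbove_setOf_le_fracFilled (hα : 0 < α) (ω : ℕ → ℕ → Bool) (n : ℕ) :
    BddAbove {k | α ≤ fracFilled ω n k} := by
  refine ⟨⌊n / α⌋₊, fun k hk => Nat.le_floor ?_⟩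
  rw [Set.mem_ofPred_eq, fracFilled, le_div_iff₀ (by positivity)] at hk
  rw [le_div_iff₀' hα]
  calc α * k ≤ α * 2 ^ k := by gcongr; exact_mod_cast Nat.lt_two_pow_self.le
    _ ≤ fillCount ω n k := hk
    _ ≤ n := Nat.cast_le.mpr (fillCount_le ω n k)

lemma le_fillupLevel_iff (hα : 0 < α) (hα1 : α ≤ 1) (hn : 2 ≤ n) :
    k ≤ fillupLevel α ω n ↔ α ≤ fracFilled ω n k := by
  have hbdd := bddAbove_setOf_le_fracFilled hα ω n
  have hmem : fillupLevel α ω n ∈ {k | α ≤ fracFilled ω n k} :=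
    Nat.sSup_mem ⟨0, hα1.trans_eq (fracFilled_zero ω hn).symm⟩ hbdd
  exact ⟨fun h => hmem.trans (fracFilled_antitone ω n h), fun h => le_csSup hbdd h⟩

lemma fracFilled_eq_sum_wordProb_half_mul (ω : ℕ → ℕ → Bool) (n k : ℕ) :
    fracFilled ω n k = ∑ r : Fin k → Bool,
      wordProb (1 / 2) r * {ω | 2 ≤ occCount (range n) r ω}.indicator 1 ω := by
  simp only [wordProb_half, ← mul_sum, Set.indicator_apply, Set.mem_ofPred_eq, Pi.one_apply,
    ← Finset.natCast_card_filter, fracFilled, fillCount, prefCount_eq_occCount]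
  rw [div_eq_inv_mul]

lemma one_sub_fracFilled_eq_sum_wordProb_half_mul (ω : ℕ → ℕ → Bool) (n k : ℕ) :
    1 - fracFilled ω n k = ∑ r : Fin k → Bool,
      wordProb (1 / 2) r * {ω | occCount (range n) r ω ≤ 1}.indicator 1 ω := by
  rw [fracFilled_eq_sum_wordProb_half_mul, sub_eq_iff_eq_add, ← sum_add_distrib]
  refine (sum_wordProb (1 / 2) k).symm.trans (sum_congr rfl fun r _ => ?_)
  rcases le_or_gt (occCount (range n) r ω) 1 with h | h
  · simp [h, (Nat.lt_succ_of_le h).not_ge]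
  · simp [h.not_ge, Nat.succ_le_of_lt h]

end FillupLevel

namespace IIDBits

variable {p c α : ℝ} {ν : Measure (ℕ → ℕ → Bool)}

lemma polyDecay_fillupLevel_lt_logLevel (hν : IIDBits p ν) (hp : p ∈ Set.Ioo (0 : ℝ) 1)
    (hα : α ∈ Set.Ioo (0 : ℝ) 1) (hc : 0 ≤ c) (hlevel : c * crossEntropy (1 / 2) p < 1) :
    PolyDecay fun n => ν.real {ω | fillupLevel α ω n < logLevel c n} := by
  have := hν.1
  have hrare := hν.polyDecay_sum_wordProb_mul_occCount_le_rpow (w := 1 / 2) (β := 0) (J := range)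
    hp (by norm_num) hc (.of_forall fun n => by rw [card_range]; omega) le_rfl (by linarith)
  simp only [Real.rpow_zero, Nat.cast_le_one] at hrare
  refine hrare.of_mul_le (sub_pos.mpr hα.2) (.of_forall fun n => measureReal_nonneg) ?_
  filter_upwards [eventually_ge_atTop 2] with n hn
  refine le_trans (mul_le_mul_of_nonneg_left (measureReal_mono fun ω hω => ?_)
    (sub_nonneg.mpr hα.2.le)) (mul_measureReal_le_sum_mul_indicator_le
      (fun r _ => wordProb_nonneg (by norm_num) r) (fun r _ => ?_) (1 - α))
  · have hfrac : fracFilled ω n (logLevel c n) < α :=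
      not_le.mp fun h => hω.not_ge ((le_fillupLevel_iff hα.1 hα.2.le hn).mpr h)
    rw [Set.mem_ofPred_eq, ← one_sub_fracFilled_eq_sum_wordProb_half_mul]
    linarith
  · exact measurableSet_le (measurable_occCount (range n) r) measurable_const

lemma polyDecay_logLevel_le_fillupLevel (hν : IIDBits p ν) (hp : p ∈ Set.Ioo (0 : ℝ) 1)
    (hα : α ∈ Set.Ioc (0 : ℝ) 1) (hc : 0 ≤ c) (hlevel : 1 < c * crossEntropy (1 / 2) p) :
    PolyDecay fun n => ν.real {ω | logLevel c n ≤ fillupLevel α ω n} := by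
  have := hν.1
  have hrare := hν.polyDecay_sum_wordProb_mul_rpow_le_occCount (w := 1 / 2) (β := 0) (J := range)
    hp (by norm_num) hc (fun n => (card_range n).le) (by linarith)
  simp only [Real.rpow_zero, Nat.one_le_cast] at hrare
  refine hrare.of_mul_le hα.1 (.of_forall fun n => measureReal_nonneg) ?_
  filter_upwards [eventually_ge_atTop 2] with n hn
  simp only [le_fillupLevel_iff hα.1 hα.2 hn, fracFilled_eq_sum_wordProb_half_mul]
  refine (mul_measureReal_le_sum_mul_indicator_le (fun r _ => wordProb_nonneg (by norm_num) r)
    (fun r _ => measurableSet_le measurable_const (measurable_occCount (range n) r)) α).trans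
    (sum_le_sum fun r _ => mul_le_mul_of_nonneg_left (measureReal_mono fun ω hω => ?_)
      (wordProb_nonneg (by norm_num) r))
  exact one_le_two.trans (Set.mem_ofPred.mp hω)

end IIDBits

section Companions

variable {α β : ℝ} {ω : ℕ → ℕ → Bool} {n k : ℕ}

/-- The number of strings with index in `1, …, n - 1` that agree with the string of index `0` in
their first `k` bits; at `k = F_n(α) + 1` it is `Y_n - 1`, string `0` itself being left out so that
the count is independent of the word it is taken at. -/
def companionCount (n k : ℕ) (ω : ℕ → ℕ → Bool) : ℕ := occCount (Ico 1 n) (strPrefix k 0 ω) ω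

lemma companionCount_antitone (n : ℕ) (ω : ℕ → ℕ → Bool) :
    Antitone (companionCount n · ω) := fun _ _ hkl =>
  card_le_card <| monotone_filter_right (Ico 1 n) fun _ _ hi =>
    funext fun j => congrFun hi (Fin.castLE hkl j)

lemma Ycount_eq_companionCount_add_one (hn : 1 ≤ n) (α : ℝ) (ω : ℕ → ℕ → Bool) :
    Ycount α ω n = companionCount n (fillupLevel α ω n + 1) ω + 1 := by
  have hrange : range n = insert 0 (Ico 1 n) := by
    rw [range_eq_Ico, ← insert_Ico_add_one_left_eq_Ico hn, zero_add]
  rw [Ycount, hrange, filter_insert, if_pos fun _ _ => rfl,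
    card_insert_of_notMem (by simp)]
  simp only [companionCount, occCount, strPrefix, funext_iff, Fin.forall_iff]

lemma companionCount_add_one_le_rpow_of_log_Ycount_div_log_le (hn : 2 ≤ n)
    (hk : fillupLevel α ω n < k) (hY : Real.log (Ycount α ω n) / Real.log n ≤ β) :
    (companionCount n k ω : ℝ) + 1 ≤ (n : ℝ) ^ β := by
  rw [Ycount_eq_companionCount_add_one (by omega), Real.log_div_log,
    Real.logb_le_iff_le_rpow (Nat.one_lt_cast.mpr hn) (by positivity)] at hY
  calc (companionCount n k ω : ℝ) + 1
      ≤ (companionCount n (fillupLevel α ω n + 1) ω + 1 : ℕ) :=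
        mod_cast Nat.succ_le_succ (companionCount_antitone n ω hk)
    _ ≤ (n : ℝ) ^ β := hY

lemma rpow_le_companionCount_add_one_of_le_log_Ycount_div_log (hn : 2 ≤ n)
    (hk : k ≤ fillupLevel α ω n + 1) (hY : β ≤ Real.log (Ycount α ω n) / Real.log n) :
    (n : ℝ) ^ β ≤ companionCount n k ω + 1 := by
  rw [Ycount_eq_companionCount_add_one (by omega), Real.log_div_log,
    Real.le_logb_iff_rpow_le (Nat.one_lt_cast.mpr hn) (by positivity)] at hY
  calc (n : ℝ) ^ β ≤ (companionCount n (fillupLevel α ω n + 1) ω + 1 : ℕ) := hY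
    _ ≤ companionCount n k ω + 1 := mod_cast Nat.succ_le_succ (companionCount_antitone n ω hk)

end Companions

namespace IIDBits

variable {p c α β : ℝ} {ν : Measure (ℕ → ℕ → Bool)}

lemma polyDecay_rpow_le_companionCount (hν : IIDBits p ν) (hp : p ∈ Set.Ioo (0 : ℝ) 1)
    (hc : 0 ≤ c) (hβ : 1 - β < c * crossEntropy p p) :
    PolyDecay fun n => ν.real {ω | (n : ℝ) ^ β ≤ companionCount n (logLevel c n) ω} := by
  have hp' : p ∈ Set.Icc (0 : ℝ) 1 := Set.Ioo_subset_Icc_self hp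
  have hdecoupled (n : ℕ) := hν.measureReal_occCount_strPrefix_mem (k := logLevel c n) hp'
    (J := Ico 1 n) (i := 0) (by simp) (measurableSet_Ici (a := (n : ℝ) ^ β))
  simp only [Set.mem_Ici] at hdecoupled
  simp only [companionCount, hdecoupled]
  exact hν.polyDecay_sum_wordProb_mul_rpow_le_occCount hp hp' hc
    (fun n => (Nat.card_Ico 1 n).trans_le (Nat.sub_le n 1)) hβ

lemma polyDecay_companionCount_le_rpow (hν : IIDBits p ν) (hp : p ∈ Set.Ioo (0 : ℝ) 1)
    (hc : 0 ≤ c) (hβ0 : 0 ≤ β) (hβ : c * crossEntropy p p < 1 - β) :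
    PolyDecay fun n => ν.real {ω | (companionCount n (logLevel c n) ω : ℝ) ≤ (n : ℝ) ^ β} := by
  have hp' : p ∈ Set.Icc (0 : ℝ) 1 := Set.Ioo_subset_Icc_self hp
  have hdecoupled (n : ℕ) := hν.measureReal_occCount_strPrefix_mem (k := logLevel c n) hp'
    (J := Ico 1 n) (i := 0) (by simp) (measurableSet_Iic (a := (n : ℝ) ^ β))
  simp only [Set.mem_Iic] at hdecoupled
  simp only [companionCount, hdecoupled]
  refine hν.polyDecay_sum_wordProb_mul_occCount_le_rpow hp hp' hc ?_ hβ0 hβ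
  filter_upwards [eventually_ge_atTop 2] with n hn
  rw [Nat.card_Ico]
  omega

lemma polyDecay_le_log_Ycount_div_log (hν : IIDBits p ν) (hp : p ∈ Set.Ioo (0 : ℝ) 1)
    (hα : α ∈ Set.Ioo (0 : ℝ) 1)
    (hβ : 1 - crossEntropy p p / crossEntropy (1 / 2) p < β) :
    PolyDecay fun n => ν.real {ω | β ≤ Real.log (Ycount α ω n) / Real.log n} := by
  have := hν.1
  have hH : 0 < crossEntropy p p := crossEntropy_pos (Set.Ioo_subset_Icc_self hp) hp
  have hL : 0 < crossEntropy (1 / 2) p := crossEntropy_pos (by norm_num) hp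
  obtain ⟨β', hβ', hβ'β⟩ := exists_between hβ
  have hβ'0 : 0 ≤ β' := by
    linarith [(div_le_one hL).mpr (crossEntropy_self_le_half hp)]
  obtain ⟨c, hc, hcL⟩ : ∃ c, max 0 ((1 - β') / crossEntropy p p) < c ∧
      c < 1 / crossEntropy (1 / 2) p := exists_between <| max_lt (one_div_pos.mpr hL) <| by
    rw [div_lt_iff₀ hH, one_div_mul_eq_div]
    linarith
  rw [max_lt_iff, div_lt_iff₀ hH] at hc
  rw [lt_div_iff₀ hL] at hcL
  refine (hν.polyDecay_fillupLevel_lt_logLevel hp hα hc.1.le hcL).measureReal_of_subset_union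
    (hν.polyDecay_rpow_le_companionCount hp hc.1.le hc.2) ?_
  have hgap : ∀ᶠ n : ℕ in atTop, (2 : ℝ) < (n : ℝ) ^ (β - β') :=
    ((tendsto_rpow_atTop (sub_pos.mpr hβ'β)).comp
      tendsto_natCast_atTop_atTop).eventually_gt_atTop 2
  filter_upwards [eventually_ge_atTop 2, hgap] with n hn hgap
  have hn1 : (1 : ℝ) < n := Nat.one_lt_cast.mpr hn
  refine fun ω hω => or_iff_not_imp_left.mpr fun hlevel => Set.mem_ofPred.mpr ?_
  have hcount := rpow_le_companionCount_add_one_of_le_log_Ycount_div_log hn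
    ((not_lt.mp hlevel).trans (Nat.le_succ _)) hω
  have hone : 1 ≤ (n : ℝ) ^ β' := Real.one_le_rpow hn1.le hβ'0
  have hdouble : 2 * (n : ℝ) ^ β' ≤ (n : ℝ) ^ β :=
    calc 2 * (n : ℝ) ^ β' ≤ (n : ℝ) ^ (β - β') * (n : ℝ) ^ β' := by gcongr
      _ = (n : ℝ) ^ β := by rw [← Real.rpow_add (by linarith), sub_add_cancel]
  linarith

lemma polyDecay_log_Ycount_div_log_le (hν : IIDBits p ν) (hp : p ∈ Set.Ioo (0 : ℝ) 1)
    (hα : α ∈ Set.Ioc (0 : ℝ) 1)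
    (hβ : β < 1 - crossEntropy p p / crossEntropy (1 / 2) p) :
    PolyDecay fun n => ν.real {ω | Real.log (Ycount α ω n) / Real.log n ≤ β} := by
  have := hν.1
  rcases lt_or_ge β 0 with hβ0 | hβ0
  · have hempty (n : ℕ) : {ω | Real.log (Ycount α ω n) / Real.log n ≤ β} = ∅ :=
      Set.eq_empty_of_forall_notMem fun ω hω => hβ0.not_ge <|
        (div_nonneg (Real.log_natCast_nonneg _) (Real.log_natCast_nonneg _)).trans hω
    simp only [hempty, measureReal_empty]
    exact ⟨1, one_pos, isBigO_zero _ _⟩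
  have hH : 0 < crossEntropy p p := crossEntropy_pos (Set.Ioo_subset_Icc_self hp) hp
  have hL : 0 < crossEntropy (1 / 2) p := crossEntropy_pos (by norm_num) hp
  obtain ⟨c, hcL, hcH⟩ : ∃ c, 1 / crossEntropy (1 / 2) p < c ∧ c < (1 - β) / crossEntropy p p :=
    exists_between <| by
      rw [lt_div_iff₀ hH, one_div_mul_eq_div]
      linarith
  have hc : 0 ≤ c := (one_div_pos.mpr hL).le.trans hcL.le
  rw [div_lt_iff₀ hL] at hcL
  rw [lt_div_iff₀ hH] at hcH
  refine (hν.polyDecay_logLevel_le_fillupLevel hp hα hc hcL).measureReal_of_subset_union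
    (hν.polyDecay_companionCount_le_rpow hp hc hβ0 hcH) ?_
  filter_upwards [eventually_ge_atTop 2] with n hn
  refine fun ω hω => or_iff_not_imp_left.mpr fun hlevel => Set.mem_ofPred.mpr ?_
  linarith [companionCount_add_one_le_rpow_of_log_Ycount_div_log_le hn (not_le.mp hlevel) hω]

end IIDBits

lemma crossEntropy_self_div_crossEntropy_half {p : ℝ} (hp : p ∈ Set.Ioo (0 : ℝ) 1) :
    (-(p * Real.logb 2 p) - (1 - p) * Real.logb 2 (1 - p)) /
        Real.logb 2 (1 / Real.sqrt (p * (1 - p))) =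
      crossEntropy p p / crossEntropy (1 / 2) p := by
  have hq : 0 < 1 - p := sub_pos.mpr hp.2
  have hentropy : -(p * Real.logb 2 p) - (1 - p) * Real.logb 2 (1 - p) =
      crossEntropy p p / Real.log 2 := by
    simp only [Real.logb, crossEntropy]
    ring
  have hsqrt : Real.logb 2 (1 / Real.sqrt (p * (1 - p))) =
      crossEntropy (1 / 2) p / Real.log 2 := by
    rw [Real.logb, one_div, Real.log_inv, Real.log_sqrt (mul_pos hp.1 hq).le,
      Real.log_mul hp.1.ne' hq.ne', crossEntropy]
    ring
  rw [hentropy, hsqrt, div_div_div_cancel_right₀ (Real.log_pos one_lt_two).ne']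

/-- Lemma A of Janson–Szpankowski: with `κ = h / log(1/√(pq))`, for every `ε > 0`,
with probability `1 - O(n^{-Θ(1)})` one has `1 - κ - ε < ln Y_n / ln n < 1 - κ + ε`. -/
theorem Ycount_concentration
    (p q α : ℝ) (hp : 0 < p) (hp1 : p < 1) (hq : q = 1 - p) (hα : 0 < α) (hα1 : α < 1)
    (h κ : ℝ) (hh : h = -(p * Real.logb 2 p) - q * Real.logb 2 q)
    (hκ : κ = h / Real.logb 2 (1 / Real.sqrt (p * q)))
    (ν : Measure (ℕ → ℕ → Bool)) (hν : IIDBits p ν) :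
    ∀ ε > (0 : ℝ), ∃ C > (0 : ℝ), ∃ δ > (0 : ℝ), ∀ n : ℕ, 2 ≤ n →
      ENNReal.ofReal (1 - C * (n : ℝ) ^ (-δ)) ≤
        ν {ω | 1 - κ - ε < Real.log (Ycount α ω n) / Real.log n ∧
               Real.log (Ycount α ω n) / Real.log n < 1 - κ + ε} := by
  intro ε hε
  have := hν.1
  subst hq hh
  rw [crossEntropy_self_div_crossEntropy_half ⟨hp, hp1⟩] at hκ
  have hlower := hν.polyDecay_log_Ycount_div_log_le (β := 1 - κ - ε) ⟨hp, hp1⟩ ⟨hα, hα1.le⟩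
    (by linarith)
  have hupper := hν.polyDecay_le_log_Ycount_div_log (β := 1 - κ + ε) ⟨hp, hp1⟩ ⟨hα, hα1⟩
    (by linarith)
  have hbad : PolyDecay fun n => ν.real {ω | 1 - κ - ε < Real.log (Ycount α ω n) / Real.log n ∧
      Real.log (Ycount α ω n) / Real.log n < 1 - κ + ε}ᶜ :=
    hlower.measureReal_of_subset_union hupper <| .of_forall fun n ω hω =>
      (not_and_or.mp hω).imp not_lt.mp not_lt.mp
  obtain ⟨C, hC, δ, hδ, hbound⟩ := hbad.exists_ofReal_one_sub_le_measure
  exact ⟨C, hC, δ, hδ, fun n hn => hbound n (one_le_two.trans hn)⟩
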